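/- Let K[n] be the set of nonempty subsets of {0, …, n}. For 0 ≤ k ≤ n define union-preserving maps j^k_n : K[n] → K[n] and r^k_n : K[n+1] → K[n] by setting, on singletons, j^k_n{i} = {i} if i ≤ k and j^k_n{i} = {0, …, i} if i > k; r^k_n{i} = {i} if i ≤ k, r^k_n{i} = {0, …, i−1} if i = k+1, and r^k_n{i} = {i−1} if i > k+1; and extending to arbitrary nonempty subsets S by taking the union over the singletons of S. For an order-preserving map φ between ordinals let φ_* denote the direct-image map on nonempty subsets; δ^i and σ^k denote the coface (injection skipping i) and codegeneracy (surjection hitting k twice) maps. Then the following equations hold (with the stated index ranges): (1) j^k_n ∘ j^h_n = j^h_n ∘ j^k_n = j^h_n for 0 ≤ h ≤ k ≤ n; (2) r^k_n ∘ (δ^{k+1})_* = id on K[n] for 0 ≤ k ≤ n; (3) j^k_n ∘ r^k_n = (σ^k)_* ∘ j^k_{n+1} for 0 ≤ k ≤ n; (4) j^h_n ∘ r^k_n = j^h_n ∘ (σ^k)_* for 0 ≤ h < k ≤ n; (5) r^k_n ∘ j^h_{n+1} = j^h_n ∘ r^k_n for 0 ≤ h ≤ k ≤ n; (6) r^k_n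 ∘ (δ^{i+1})_* = (δ^i)_* ∘ r^k_{n−1} for 0 ≤ k < i ≤ n; (7) j^k_n ∘ r^k_n ∘ r^k_{n+1} = j^k_n ∘ r^k_n ∘ (σ^{k+1})_* for 0 ≤ k ≤ n; (8) j^k_{n+1} ∘ (δ^h)_* ∘ j^k_n = j^k_{n+1} ∘ (δ^h)_* for 0 ≤ k ≤ n and 0 ≤ h ≤ n+1; (9) j^k_n ∘ r^k_n ∘ (δ^i)_* ∘ j^{k−1}_n = j^k_n ∘ r^k_n ∘ (δ^i)_* for 0 ≤ i ≤ k ≤ n; (10) (σ^h)_* ∘ j^k_{n+1} ∘ r^k_{n+1} = j^{k−1}_n ∘ r^{k−1}_n ∘ (σ^h)_* for 0 ≤ h < k ≤ n+1; (11) (σ^h)_* ∘ j^k_{n+1} ∘ r^k_{n+1} = j^k_n ∘ r^k_n ∘ (σ^{h+1})_* for 0 ≤ k ≤ h ≤ n. (Here composites are written in the usual right-to-left order, and each equation is an equality of maps between the appropriate sets of nonempty subsets.) -/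

import Mathlib

/-- `K n` is the set of nonempty subsets of the ordinal `[n] = {0, …, n}`. -/
def K (n : ℕ) : Type := {S : Finset (Fin (n + 1)) // S.Nonempty}

/-- The value of Moss's map `j^k_n` on the singleton `{i}`:
`{i}` if `i ≤ k`, and `{0, …, i}` if `i > k`. -/
def jS (n k : ℕ) (i : Fin (n + 1)) : Finset (Fin (n + 1)) :=
  if i.val ≤ k then {i} else Finset.Iic i

lemma jS_nonempty (n k : ℕ) (i : Fin (n + 1)) : (jS n k i).Nonempty := by
  unfold jS; split
  · exact Finset.singleton_nonempty _
  · exact ⟨i, Finset.mem_Iic.2 le_rfl⟩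

/-- The value of Moss's map `r^k_n` on the singleton `{i}` (for `i ≤ k ≤ n` the `min` is
just `i`): `{i}` if `i ≤ k`, `{0, …, i − 1}` if `i = k + 1`, and `{i − 1}` if `i > k + 1`. -/
def rS (n k : ℕ) (i : Fin (n + 2)) : Finset (Fin (n + 1)) :=
  if i.val ≤ k then {⟨min i.val n, by omega⟩}
  else if i.val = k + 1 then Finset.Iic ⟨i.val - 1, by have := i.isLt; omega⟩
  else {⟨i.val - 1, by have := i.isLt; omega⟩}

lemma rS_nonempty (n k : ℕ) (i : Fin (n + 2)) : (rS n k i).Nonempty := by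
  unfold rS; split
  · exact Finset.singleton_nonempty _
  · split
    · exact ⟨_, Finset.mem_Iic.2 le_rfl⟩
    · exact Finset.singleton_nonempty _

/-- Extension of a singleton-wise map to a union-preserving map on nonempty subsets. -/
def kMap {a b : ℕ} (f : Fin (a + 1) → Finset (Fin (b + 1)))
    (hf : ∀ i, (f i).Nonempty) (S : K a) : K b :=
  ⟨S.1.biUnion f, by
    obtain ⟨i, hi⟩ := S.2
    obtain ⟨x, hx⟩ := hf i
    exact ⟨x, Finset.mem_biUnion.2 ⟨i, hi, hx⟩⟩⟩

/-- Moss's map `j^k_n : K[n] → K[n]`. -/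
def j (n k : ℕ) : K n → K n := kMap (jS n k) (jS_nonempty n k)

/-- Moss's map `r^k_n : K[n+1] → K[n]`. -/
def r (n k : ℕ) : K (n + 1) → K n := kMap (rS n k) (rS_nonempty n k)

/-- The direct image map `φ_*` on nonempty subsets induced by `φ`. -/
def star {a b : ℕ} (φ : Fin (a + 1) → Fin (b + 1)) (S : K a) : K b :=
  ⟨S.1.image φ, S.2.image φ⟩

/-- `m` is the value of some element of the nonempty subset `S` of `[n]`. -/
def HasVal {n : ℕ} (S : K n) (m : ℕ) : Prop := ∃ i ∈ S.1, i.val = m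

lemma K.ext_hasVal {n : ℕ} {S T : K n} (h : ∀ x, HasVal S x ↔ HasVal T x) : S = T := by
  refine Subtype.ext (Finset.ext fun a => ?_)
  simpa [HasVal, Fin.val_inj] using h a.val

lemma hasVal_kMap_iff {a b : ℕ} {f : Fin (a + 1) → Finset (Fin (b + 1))}
    {hf : ∀ i, (f i).Nonempty} {R : ℕ → ℕ → Prop}
    (hR : ∀ i x, (∃ y ∈ f i, y.val = x) ↔ R i.val x) (S : K a) (x : ℕ) :
    HasVal (kMap f hf S) x ↔ ∃ i, HasVal S i ∧ R i x := by
  simp only [HasVal, kMap, Finset.mem_biUnion]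
  constructor
  · rintro ⟨y, ⟨i, hi, hy⟩, rfl⟩
    exact ⟨i, ⟨i, hi, rfl⟩, (hR i y).1 ⟨y, hy, rfl⟩⟩
  · rintro ⟨_, ⟨i, hi, rfl⟩, h⟩
    obtain ⟨y, hy, rfl⟩ := (hR i x).2 h
    exact ⟨y, ⟨i, hi, hy⟩, rfl⟩

lemma hasVal_star_iff {a b : ℕ} {φ : Fin (a + 1) → Fin (b + 1)} {R : ℕ → ℕ → Prop}
    (hR : ∀ i x, (φ i).val = x ↔ R i.val x) (S : K a) (x : ℕ) :
    HasVal (star φ S) x ↔ ∃ i, HasVal S i ∧ R i x := by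
  simp [HasVal, _root_.star, ← hR]

lemma hasVal_j (n k : ℕ) (S : K n) (x : ℕ) :
    HasVal (j n k S) x ↔ ∃ i, HasVal S i ∧ (i ≤ k ∧ x = i ∨ k < i ∧ x ≤ i) := by
  refine hasVal_kMap_iff
    (R := fun i x => i ≤ k ∧ x = i ∨ k < i ∧ x ≤ i) (fun i x => ?_) S x
  unfold jS
  split_ifs with h
  · simp only [Finset.mem_singleton, exists_eq_left]
    omega
  · simp only [Finset.mem_Iic, Fin.le_def]
    constructor
    · rintro ⟨y, hy, rfl⟩
      omega
    · intro hx
      exact ⟨⟨x, by omega⟩, by dsimp only; omega, rfl⟩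

lemma hasVal_r {n k : ℕ} (hk : k ≤ n) (S : K (n + 1)) (x : ℕ) :
    HasVal (r n k S) x ↔ ∃ i, HasVal S i ∧
      (i ≤ k ∧ x = i ∨ i = k + 1 ∧ x ≤ k ∨ k + 1 < i ∧ i = x + 1) := by
  refine hasVal_kMap_iff
    (R := fun i x => i ≤ k ∧ x = i ∨ i = k + 1 ∧ x ≤ k ∨ k + 1 < i ∧ i = x + 1)
    (fun i x => ?_) S x
  unfold rS
  split_ifs with h h'
  · simp only [Finset.mem_singleton, exists_eq_left]
    omega
  · simp only [Finset.mem_Iic, Fin.le_def]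
    constructor
    · rintro ⟨y, hy, rfl⟩
      omega
    · intro hx
      exact ⟨⟨x, by omega⟩, by dsimp only; omega, rfl⟩
  · simp only [Finset.mem_singleton, exists_eq_left]
    omega

lemma hasVal_star_succAbove {n : ℕ} (h : Fin (n + 2)) (S : K n) (x : ℕ) :
    HasVal (star (Fin.succAbove h) S) x ↔
      ∃ i, HasVal S i ∧ x = if i < h.val then i else i + 1 := by
  refine hasVal_star_iff (R := fun i x => x = if i < h.val then i else i + 1)
    (fun i x => ?_) S x
  simp only [Fin.succAbove, Fin.lt_def, Fin.val_castSucc]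
  split_ifs <;> simp [eq_comm]

lemma hasVal_star_predAbove {n : ℕ} (k : Fin (n + 1)) (S : K (n + 1)) (x : ℕ) :
    HasVal (star (Fin.predAbove k) S) x ↔
      ∃ i, HasVal S i ∧ x = if i ≤ k.val then i else i - 1 := by
  refine hasVal_star_iff (R := fun i x => x = if i ≤ k.val then i else i - 1)
    (fun i x => ?_) S x
  simp only [Fin.predAbove, Fin.lt_def, Fin.val_castSucc]
  split_ifs <;> simp <;> omega

lemma hasVal_j_r {n k : ℕ} (hk : k ≤ n) (S : K (n + 1)) (x : ℕ) :
    HasVal (j n k (r n k S)) x ↔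
      ∃ i, HasVal S i ∧ (i ≤ k ∧ x = i ∨ k < i ∧ x < i) := by
  simp only [hasVal_j, hasVal_r hk]
  constructor
  · rintro ⟨y, ⟨i, hi, h⟩, h'⟩
    exact ⟨i, hi, by omega⟩
  · rintro ⟨i, hi, h⟩
    exact ⟨if i ≤ k then i else if i = k + 1 then x else i - 1, ⟨i, hi, by grind⟩, by grind⟩

/-- S. Moss's equations for the maps `j^k_n`, `r^k_n` and the direct images of the coface
maps `δ^i` (realized as `Fin.succAbove i`, the order-preserving injection skipping `i`) and
codegeneracy maps `σ^k` (realized as `Fin.predAbove k`, the order-preserving surjection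
taking the value `k` twice), with composites written right-to-left. -/
theorem moss_equations :
    -- (1) j^k_n ∘ j^h_n = j^h_n ∘ j^k_n = j^h_n,  0 ≤ h ≤ k ≤ n
    (∀ (n h k : ℕ) (_hhk : h ≤ k) (_hkn : k ≤ n) (S : K n),
      j n k (j n h S) = j n h S ∧ j n h (j n k S) = j n h S) ∧
    -- (2) r^k_n ∘ (δ^{k+1})_* = id,  0 ≤ k ≤ n
    (∀ (n k : ℕ) (_hkn : k ≤ n) (S : K n),
      r n k (star (Fin.succAbove (⟨k + 1, by omega⟩ : Fin (n + 2))) S) = S) ∧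
    -- (3) j^k_n ∘ r^k_n = (σ^k)_* ∘ j^k_{n+1},  0 ≤ k ≤ n
    (∀ (n k : ℕ) (_hkn : k ≤ n) (S : K (n + 1)),
      j n k (r n k S) =
        star (Fin.predAbove (⟨k, by omega⟩ : Fin (n + 1))) (j (n + 1) k S)) ∧
    -- (4) j^h_n ∘ r^k_n = j^h_n ∘ (σ^k)_*,  0 ≤ h < k ≤ n
    (∀ (n h k : ℕ) (_hhk : h < k) (_hkn : k ≤ n) (S : K (n + 1)),
      j n h (r n k S) = j n h (star (Fin.predAbove (⟨k, by omega⟩ : Fin (n + 1))) S)) ∧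
    -- (5) r^k_n ∘ j^h_{n+1} = j^h_n ∘ r^k_n,  0 ≤ h ≤ k ≤ n
    (∀ (n h k : ℕ) (_hhk : h ≤ k) (_hkn : k ≤ n) (S : K (n + 1)),
      r n k (j (n + 1) h S) = j n h (r n k S)) ∧
    -- (6) r^k_{n+1} ∘ (δ^{i+1})_* = (δ^i)_* ∘ r^k_n,  0 ≤ k < i ≤ n+1
    (∀ (n k i : ℕ) (_hki : k < i) (_hin : i ≤ n + 1) (S : K (n + 1)),
      r (n + 1) k (star (Fin.succAbove (⟨i + 1, by omega⟩ : Fin (n + 3))) S) =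
        star (Fin.succAbove (⟨i, by omega⟩ : Fin (n + 2))) (r n k S)) ∧
    -- (7) j^k_n ∘ r^k_n ∘ r^k_{n+1} = j^k_n ∘ r^k_n ∘ (σ^{k+1})_*,  0 ≤ k ≤ n
    (∀ (n k : ℕ) (_hkn : k ≤ n) (S : K (n + 2)),
      j n k (r n k (r (n + 1) k S)) =
        j n k (r n k (star (Fin.predAbove (⟨k + 1, by omega⟩ : Fin (n + 2))) S))) ∧
    -- (8) j^k_{n+1} ∘ (δ^h)_* ∘ j^k_n = j^k_{n+1} ∘ (δ^h)_*,  0 ≤ k ≤ n, 0 ≤ h ≤ n+1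
    (∀ (n k h : ℕ) (_hkn : k ≤ n) (_hhn : h ≤ n + 1) (S : K n),
      j (n + 1) k (star (Fin.succAbove (⟨h, by omega⟩ : Fin (n + 2))) (j n k S)) =
        j (n + 1) k (star (Fin.succAbove (⟨h, by omega⟩ : Fin (n + 2))) S)) ∧
    -- (9) j^k_n ∘ r^k_n ∘ (δ^i)_* ∘ j^{k−1}_n = j^k_n ∘ r^k_n ∘ (δ^i)_*,  0 ≤ i ≤ k ≤ n
    (∀ (n i k : ℕ) (_hik : i ≤ k) (_hkn : k ≤ n) (S : K n),
      j n k (r n k (star (Fin.succAbove (⟨i, by omega⟩ : Fin (n + 2))) (j n (k - 1) S))) =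
        j n k (r n k (star (Fin.succAbove (⟨i, by omega⟩ : Fin (n + 2))) S))) ∧
    -- (10) (σ^h)_* ∘ j^k_{n+1} ∘ r^k_{n+1} = j^{k−1}_n ∘ r^{k−1}_n ∘ (σ^h)_*,
    --      0 ≤ h < k ≤ n+1
    (∀ (n h k : ℕ) (_hhk : h < k) (_hkn : k ≤ n + 1) (S : K (n + 2)),
      star (Fin.predAbove (⟨h, by omega⟩ : Fin (n + 1))) (j (n + 1) k (r (n + 1) k S)) =
        j n (k - 1) (r n (k - 1)
          (star (Fin.predAbove (⟨h, by omega⟩ : Fin (n + 2))) S))) ∧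
    -- (11) (σ^h)_* ∘ j^k_{n+1} ∘ r^k_{n+1} = j^k_n ∘ r^k_n ∘ (σ^{h+1})_*,  0 ≤ k ≤ h ≤ n
    (∀ (n k h : ℕ) (_hkh : k ≤ h) (_hhn : h ≤ n) (S : K (n + 2)),
      star (Fin.predAbove (⟨h, by omega⟩ : Fin (n + 1))) (j (n + 1) k (r (n + 1) k S)) =
        j n k (r n k (star (Fin.predAbove (⟨h + 1, by omega⟩ : Fin (n + 2))) S))) := by
  refine ⟨?_, ?_, ?_, ?_, ?_, ?_, ?_, ?_, ?_, ?_, ?_⟩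
  · intro n h k hhk hkn S
    constructor <;> refine K.ext_hasVal fun x => ?_ <;> simp only [hasVal_j]
    · constructor
      · rintro ⟨y, ⟨i, hi, h₁⟩, h₂⟩
        exact ⟨i, hi, by grind⟩
      · rintro ⟨i, hi, h₁⟩
        exact ⟨x, ⟨i, hi, by grind⟩, by grind⟩
    · constructor
      · rintro ⟨y, ⟨i, hi, h₁⟩, h₂⟩
        exact ⟨i, hi, by grind⟩
      · rintro ⟨i, hi, h₁⟩
        exact ⟨i, ⟨i, hi, by grind⟩, by grind⟩
  · intro n k hkn S
    refine K.ext_hasVal fun x => ?_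
    simp only [hasVal_r hkn, hasVal_star_succAbove]
    constructor
    · rintro ⟨y, ⟨i, hi, h₁⟩, h₂⟩
      obtain rfl : x = i := by grind
      exact hi
    · intro hx
      exact ⟨if x < k + 1 then x else x + 1, ⟨x, hx, by grind⟩, by grind⟩
  · intro n k hkn S
    refine K.ext_hasVal fun x => ?_
    simp only [hasVal_j_r hkn, hasVal_star_predAbove, hasVal_j]
    constructor
    · rintro ⟨i, hi, h₁⟩
      exact ⟨if x ≤ k then x else x + 1, ⟨i, hi, by grind⟩, by grind⟩
    · rintro ⟨y, ⟨i, hi, h₁⟩, h₂⟩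
      exact ⟨i, hi, by grind⟩
  · intro n h k hhk hkn S
    refine K.ext_hasVal fun x => ?_
    simp only [hasVal_j, hasVal_r hkn, hasVal_star_predAbove]
    constructor
    · rintro ⟨y, ⟨i, hi, h₁⟩, h₂⟩
      exact ⟨if i ≤ k then i else i - 1, ⟨i, hi, by grind⟩, by grind⟩
    · rintro ⟨y, ⟨i, hi, h₁⟩, h₂⟩
      exact ⟨if i ≤ k then i else i - 1, ⟨i, hi, by grind⟩, by grind⟩
  · intro n h k hhk hkn S
    refine K.ext_hasVal fun x => ?_
    simp only [hasVal_j, hasVal_r hkn]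
    constructor
    · rintro ⟨y, ⟨i, hi, h₁⟩, h₂⟩
      exact ⟨if i ≤ k then i else if i = k + 1 then x else i - 1, ⟨i, hi, by grind⟩, by grind⟩
    · rintro ⟨y, ⟨i, hi, h₁⟩, h₂⟩
      exact ⟨if x ≤ k then x else x + 1, ⟨i, hi, by grind⟩, by grind⟩
  · intro n k m hkm hmn S
    refine K.ext_hasVal fun x => ?_
    simp only [hasVal_r (show k ≤ n + 1 by omega), hasVal_r (show k ≤ n by omega),
      hasVal_star_succAbove]
    constructor
    · rintro ⟨y, ⟨i, hi, h₁⟩, h₂⟩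
      exact ⟨if x < m then x else x - 1, ⟨i, hi, by grind⟩, by grind⟩
    · rintro ⟨y, ⟨i, hi, h₁⟩, h₂⟩
      exact ⟨if i < m + 1 then i else i + 1, ⟨i, hi, by grind⟩, by grind⟩
  · intro n k hkn S
    refine K.ext_hasVal fun x => ?_
    simp only [hasVal_j_r hkn, hasVal_r (show k ≤ n + 1 by omega), hasVal_star_predAbove]
    constructor
    · rintro ⟨y, ⟨i, hi, h₁⟩, h₂⟩
      exact ⟨if i ≤ k + 1 then i else i - 1, ⟨i, hi, by grind⟩, by grind⟩
    · rintro ⟨y, ⟨i, hi, h₁⟩, h₂⟩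
      exact ⟨if i ≤ k then i else if i = k + 1 then x else i - 1, ⟨i, hi, by grind⟩, by grind⟩
  · intro n k h hkn hhn S
    refine K.ext_hasVal fun x => ?_
    simp only [hasVal_j, hasVal_star_succAbove]
    constructor
    · rintro ⟨z, ⟨y, ⟨i, hi, h₁⟩, h₂⟩, h₃⟩
      exact ⟨if i < h then i else i + 1, ⟨i, hi, by grind⟩, by grind⟩
    · rintro ⟨y, ⟨i, hi, h₁⟩, h₂⟩
      exact ⟨if i < h then i else i + 1, ⟨i, ⟨i, hi, by grind⟩, by grind⟩, by grind⟩
  · intro n m k hmk hkn S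
    refine K.ext_hasVal fun x => ?_
    simp only [hasVal_j_r hkn, hasVal_j, hasVal_star_succAbove]
    constructor
    · rintro ⟨z, ⟨y, ⟨i, hi, h₁⟩, h₂⟩, h₃⟩
      exact ⟨if i < m then i else i + 1, ⟨i, hi, by grind⟩, by grind⟩
    · rintro ⟨y, ⟨i, hi, h₁⟩, h₂⟩
      exact ⟨if i < m then i else i + 1, ⟨i, ⟨i, hi, by grind⟩, by grind⟩, by grind⟩
  · intro n h k hhk hkn S
    refine K.ext_hasVal fun x => ?_
    simp only [hasVal_j_r hkn, hasVal_j_r (show k - 1 ≤ n by omega), hasVal_star_predAbove]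
    constructor
    · rintro ⟨y, ⟨i, hi, h₁⟩, h₂⟩
      exact ⟨if i ≤ h then i else i - 1, ⟨i, hi, by grind⟩, by grind⟩
    · rintro ⟨y, ⟨i, hi, h₁⟩, h₂⟩
      exact ⟨if i ≤ k then i else if x ≤ h then x else x + 1, ⟨i, hi, by grind⟩, by grind⟩
  · intro n k h hkh hhn S
    refine K.ext_hasVal fun x => ?_
    simp only [hasVal_j_r (show k ≤ n + 1 by omega), hasVal_j_r (show k ≤ n by omega),
      hasVal_star_predAbove]
    constructor
    · rintro ⟨y, ⟨i, hi, h₁⟩, h₂⟩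
      exact ⟨if i ≤ h + 1 then i else i - 1, ⟨i, hi, by grind⟩, by grind⟩
    · rintro ⟨y, ⟨i, hi, h₁⟩, h₂⟩
      exact ⟨if i ≤ k then i else if x ≤ h then x else x + 1, ⟨i, hi, by grind⟩, by grind⟩
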